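/- Let λ ∈ ℂ. There exist a nonzero complex Hilbert space H and bounded linear operators Q₁, Q₂, Q₃, Q₄ on H with Qₖ² = Qₖ for all k and Q₁ + Q₂ + Q₃ + Q₄ = λ·I if and only if λ = 2 or λ = 2 + 2/k or λ = 2 − 2/k for some positive integer k. -/

import Mathlib

section Spectrum

variable {K A : Type*} [Field K] [Ring A] [Algebra K A]

/-- The spectrum of `p + q - 1`, for idempotents `p` and `q`, is symmetric about `0` away
from `±1`. -/
theorem IsIdempotentElem.neg_mem_spectrum_add_sub_one {p q : A} (hp : IsIdempotentElem p)
    (hq : IsIdempotentElem q) {t : K} (ht : t ∈ spectrum K (p + q - 1)) (h1 : t ≠ 1)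
    (h2 : t ≠ -1) : -t ∈ spectrum K (p + q - 1) := by
  by_contra hneg
  rw [spectrum.notMem_iff, map_neg] at hneg
  refine ht ?_
  have hp' : p * p = p := hp
  have hq' : q * q = q := hq
  set x : A := p + q - 1 with hx
  set y : A := p - q with hy
  set c : A := algebraMap K A t with hc
  have hxy : x * y = -(y * x) := by
    simp only [hx, hy, mul_sub, sub_mul, mul_add, add_mul, hp', hq', one_mul, mul_one]
    abel
  have hyy : y * y = 1 - x * x := by
    simp only [hx, hy, mul_sub, sub_mul, mul_add, add_mul, hp', hq', one_mul, mul_one]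
    abel
  clear_value x y
  have hcx : c * x = x * c := Algebra.commutes t x
  have hcy : c * y = y * c := Algebra.commutes t y
  obtain ⟨u, hu⟩ := hneg
  have hleft : (c - x) * y = -(y * u) := by
    rw [hu, sub_mul, hxy, hcy, mul_sub, mul_neg]; abel
  have hright : y * (c - x) = -(u * y) := by
    rw [hu, sub_mul, hxy, neg_mul, hcy, mul_sub]; abel
  have hcc : c * c - 1 = (t ^ 2 - 1) • (1 : A) := by
    rw [Algebra.smul_def, mul_one, map_sub, map_pow, map_one, sq]
  have ht2 : t ^ 2 - 1 ≠ 0 := by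
    intro h
    rcases mul_self_eq_one_iff.mp ((sq t).symm.trans (sub_eq_zero.mp h)) with h | h
    exacts [h1 h, h2 h]
  set w : A := y * ↑u⁻¹ * y + (c + x) with hw
  have hmul : (c - x) * w = (t ^ 2 - 1) • (1 : A) := by
    rw [hw, mul_add, ← mul_assoc, ← mul_assoc, hleft, neg_mul, Units.mul_inv_cancel_right,
      neg_mul, hyy, ← hcc, mul_add, sub_mul, sub_mul, hcx]
    abel
  have hmul' : w * (c - x) = (t ^ 2 - 1) • (1 : A) := by
    rw [hw, add_mul, mul_assoc, hright, mul_neg, mul_assoc, Units.inv_mul_cancel_left,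
      hyy, ← hcc, add_mul, mul_sub, mul_sub, hcx]
    abel
  exact ⟨⟨c - x, (t ^ 2 - 1)⁻¹ • w, by rw [mul_smul_comm, hmul, inv_smul_smul₀ ht2],
    by rw [smul_mul_assoc, hmul', inv_smul_smul₀ ht2]⟩, rfl⟩

end Spectrum

/-- A translation walk `t, t + 2μ, t + 4μ, …` generated by a set that is symmetric about `0`
away from `±1` and about `μ` away from `μ ± 1` can stay bounded only by hitting `±1`. -/
theorem exists_add_mul_eq_one_or_neg_one {S : Set ℂ} (hS : Bornology.IsBounded S) {μ t : ℂ}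
    (hμ : μ ≠ 0) (hneg : ∀ s ∈ S, s ≠ 1 → s ≠ -1 → -s ∈ S)
    (hrefl : ∀ s ∈ S, μ - s ≠ 1 → μ - s ≠ -1 → 2 * μ - s ∈ S) (ht : t ∈ S) :
    ∃ n : ℕ, t + n * μ = 1 ∨ t + n * μ = -1 := by
  by_contra! h
  have hmem : ∀ n : ℕ, t + (2 * n : ℕ) * μ ∈ S := by
    intro n
    induction n with
    | zero => simpa using ht
    | succ n ih =>
      have hodd := h (2 * n + 1)
      push_cast at hodd
      have := hrefl _ (hneg _ ih (h _).1 (h _).2)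
        (fun e => hodd.1 (by push_cast at e; linear_combination e))
        (fun e => hodd.2 (by push_cast at e; linear_combination e))
      convert this using 1
      push_cast
      ring
  obtain ⟨C, hC⟩ := hS.exists_norm_le
  obtain ⟨n, hn⟩ := exists_nat_gt ((C + ‖t‖) / ‖μ‖)
  have hμ' : 0 < ‖μ‖ := norm_pos_iff.mpr hμ
  rw [div_lt_iff₀ hμ'] at hn
  have hle : ‖((2 * n : ℕ) : ℂ) * μ‖ ≤ C + ‖t‖ := by
    calc ‖((2 * n : ℕ) : ℂ) * μ‖ = ‖(t + (2 * n : ℕ) * μ) - t‖ := by ring_nf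
      _ ≤ ‖t + (2 * n : ℕ) * μ‖ + ‖t‖ := norm_sub_le _ _
      _ ≤ C + ‖t‖ := by gcongr; exact hC _ (hmem n)
  rw [norm_mul, Complex.norm_natCast] at hle
  push_cast at hle
  have : 0 ≤ (n : ℝ) * ‖μ‖ := by positivity
  linarith

/-- If four idempotents of a nontrivial complex Banach algebra sum to the scalar `2 + μ` with
`μ ≠ 0`, then `μ = ±2/k` for a positive integer `k`. -/
theorem exists_eq_two_div_of_four_idempotents_sum {A : Type*} [NormedRing A] [NormedAlgebra ℂ A]
    [CompleteSpace A] [Nontrivial A] {p q r s : A} (hp : IsIdempotentElem p)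
    (hq : IsIdempotentElem q) (hr : IsIdempotentElem r) (hs : IsIdempotentElem s) {μ : ℂ}
    (hμ : μ ≠ 0) (hsum : p + q + r + s = algebraMap ℂ A (2 + μ)) :
    ∃ k : ℕ, 0 < k ∧ (μ = 2 / (k : ℂ) ∨ μ = -(2 / (k : ℂ))) := by
  have hrs : r + s - 1 = algebraMap ℂ A μ - (p + q - 1) := by
    have h2 : algebraMap ℂ A (2 + μ) = 1 + 1 + algebraMap ℂ A μ := by
      rw [map_add, map_ofNat, one_add_one_eq_two]
    rw [h2] at hsum
    rw [← sub_eq_zero] at hsum ⊢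
    rw [← hsum]
    abel
  have hmem : ∀ z : ℂ, z ∈ spectrum ℂ (r + s - 1) ↔ μ - z ∈ spectrum ℂ (p + q - 1) := by
    intro z
    rw [hrs, ← spectrum.singleton_sub_eq, Set.singleton_sub]
    constructor
    · rintro ⟨w, hw, rfl⟩
      simpa using hw
    · intro h
      exact ⟨_, h, by simp⟩
  set S := spectrum ℂ (p + q - 1)
  have hS : Bornology.IsBounded S := spectrum.isBounded _
  obtain ⟨t, ht⟩ : S.Nonempty := spectrum.nonempty _
  have hneg : ∀ z ∈ S, z ≠ 1 → z ≠ -1 → -z ∈ S := fun z hz h1 h2 =>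
    hp.neg_mem_spectrum_add_sub_one hq hz h1 h2
  have hrefl : ∀ z ∈ S, μ - z ≠ 1 → μ - z ≠ -1 → 2 * μ - z ∈ S := by
    intro z hz h1 h2
    have := (hmem _).1 (hr.neg_mem_spectrum_add_sub_one hs ((hmem (μ - z)).2 (by simpa using hz))
      h1 h2)
    convert this using 1
    ring
  obtain ⟨n, hn⟩ := exists_add_mul_eq_one_or_neg_one hS hμ hneg hrefl ht
  -- the walk in the opposite direction is that of the reflected set `μ - S`
  obtain ⟨m, hm⟩ := exists_add_mul_eq_one_or_neg_one (S := spectrum ℂ (r + s - 1)) (μ := μ)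
    (t := μ - t) (spectrum.isBounded _) hμ
    (fun z hz h1 h2 => hr.neg_mem_spectrum_add_sub_one hs hz h1 h2)
    (fun z hz h1 h2 => by
      rw [hmem] at hz ⊢
      convert hneg _ hz h1 h2 using 1
      ring)
    ((hmem _).2 (by simpa using ht))
  have hk : ((n + m + 1 : ℕ) : ℂ) ≠ 0 := Nat.cast_ne_zero.mpr (by lia)
  refine ⟨n + m + 1, by lia, ?_⟩
  have hprod : ((n + m + 1 : ℕ) : ℂ) * μ ≠ 0 := mul_ne_zero hk hμ
  rw [eq_div_iff hk, ← neg_div, eq_div_iff hk]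
  push_cast at hprod ⊢
  rcases hn with hn | hn <;> rcases hm with hm | hm
  · left; linear_combination hn + hm
  · exact absurd (by linear_combination hn + hm) hprod
  · exact absurd (by linear_combination hn + hm) hprod
  · right; linear_combination hn + hm

section Construction

variable {ι : Type*}

/-- The operator `f ↦ ((1 + t) f + ε (1 - t) (f ∘ σ)) / 2` on functions on `ι`. -/
noncomputable def reflectionIdempotent (σ : ι → ι) (t : ι → ℂ) (ε : ℂ) :
    Module.End ℂ (EuclideanSpace ℂ ι) where
  toFun f := WithLp.toLp 2 fun j => ((1 + t j) * f j + ε * (1 - t j) * f (σ j)) / 2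
  map_add' f g := by
    ext j
    simp only [PiLp.add_apply]
    ring
  map_smul' c f := by
    ext j
    simp only [PiLp.smul_apply, smul_eq_mul, RingHom.id_apply]
    ring

theorem reflectionIdempotent_apply (σ : ι → ι) (t : ι → ℂ) (ε : ℂ) (f : EuclideanSpace ℂ ι)
    (j : ι) : reflectionIdempotent σ t ε f j =
      ((1 + t j) * f j + ε * (1 - t j) * f (σ j)) / 2 := rfl

theorem isIdempotentElem_reflectionIdempotent {σ : ι → ι} {t : ι → ℂ} {ε : ℂ}
    (hσ : Function.Involutive σ) (ht : ∀ j, t (σ j) = -t j ∨ σ j = j ∧ t j = 1)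
    (hε : ε ^ 2 = 1) : IsIdempotentElem (reflectionIdempotent σ t ε) := by
  refine LinearMap.ext fun f => ?_
  ext j
  rw [Module.End.mul_apply]
  simp only [reflectionIdempotent_apply, hσ j]
  rcases ht j with h | ⟨h, h'⟩
  · rw [h]
    linear_combination (1 - t j) * (1 + t j) * f j / 4 * hε
  · rw [h, h']
    ring

theorem reflectionIdempotent_add_neg (σ : ι → ι) (t : ι → ℂ) (f : EuclideanSpace ℂ ι) (j : ι) :
    reflectionIdempotent σ t 1 f j + reflectionIdempotent σ t (-1) f j = (1 + t j) * f j := by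
  simp only [reflectionIdempotent_apply]
  ring

end Construction

/-- The involution of `Fin k` exchanging `j` and `j + 1` for `j` satisfying
`P` (a parity condition), with the unpaired points fixed. -/
def adjacentSwap (k : ℕ) (P : ℕ → Prop) [DecidablePred P] (j : Fin k) : Fin k :=
  if P j then if h : (j : ℕ) + 1 < k then ⟨j + 1, h⟩ else j else ⟨j - 1, by lia⟩

/-- For `k > 0` there are four idempotents on `ℂᵏ` with sum `2 + 2/k`. -/
theorem exists_four_idempotents_sum_two_add (k : ℕ) (hk : 0 < k) :
    ∃ Q : Fin 4 → Module.End ℂ (EuclideanSpace ℂ (Fin k)),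
      (∀ i, IsIdempotentElem (Q i)) ∧ ∑ i, Q i = (2 + 2 / (k : ℂ)) • 1 := by
  have hk0 : (k : ℂ) ≠ 0 := Nat.cast_ne_zero.mpr hk.ne'
  set μ : ℂ := 2 / (k : ℂ) with hμ
  have hkμ : (k : ℂ) * μ = 2 := by rw [hμ]; field_simp
  let t : Fin k → ℂ := fun j => if Even (j : ℕ) then -1 + (j + 1) * μ else 1 - j * μ
  let t' : Fin k → ℂ := fun j => μ - t j
  let σ := adjacentSwap k Even
  let σ' := adjacentSwap k Odd
  have hσ : Function.Involutive σ := by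
    intro j
    ext
    simp only [σ, adjacentSwap]
    grind
  have hσ' : Function.Involutive σ' := by
    intro j
    ext
    simp only [σ', adjacentSwap]
    grind
  have hlast : ∀ j : Fin k, ¬ (j : ℕ) + 1 < k → ((j : ℕ) : ℂ) = k - 1 := by
    intro j hj
    have : (j : ℕ) + 1 = k := by lia
    rw [eq_sub_iff_add_eq]
    exact_mod_cast this
  have ht : ∀ j, t (σ j) = -t j ∨ σ j = j ∧ t j = 1 := by
    intro j
    by_cases hj : Even (j : ℕ)
    · by_cases hjk : (j : ℕ) + 1 < k
      · left
        have : ¬ Even ((j : ℕ) + 1) := by grind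
        simp only [t, σ, adjacentSwap, hj, hjk, this, if_true, if_false, dif_pos]
        push_cast; ring
      · right
        simp only [t, σ, adjacentSwap, hj, hjk, if_true, dif_neg, not_false_eq_true, true_and]
        rw [hlast j hjk]
        linear_combination hkμ
    · left
      obtain ⟨i, hi⟩ : ∃ i, (j : ℕ) = i + 1 := ⟨j - 1, by grind⟩
      have : Even i := by grind
      simp only [t, σ, adjacentSwap, hj, if_false]
      simp only [hi, Nat.add_sub_cancel, this, if_true]
      push_cast; ring
  have ht' : ∀ j, t' (σ' j) = -t' j ∨ σ' j = j ∧ t' j = 1 := by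
    intro j
    by_cases hj : Even (j : ℕ)
    · have hj' : ¬ Odd (j : ℕ) := by grind
      rcases Nat.eq_zero_or_pos (j : ℕ) with h0 | h0
      · right
        refine ⟨?_, ?_⟩
        · ext
          simp only [σ', adjacentSwap, hj', if_false]
          lia
        · simp [t', t, h0]
      · left
        obtain ⟨i, hi⟩ : ∃ i, (j : ℕ) = i + 1 := ⟨j - 1, by lia⟩
        have : ¬ Even i := by grind
        simp only [t', t, σ', adjacentSwap, hj', hj, if_false, if_true]
        simp only [hi, Nat.add_sub_cancel, this, if_false]
        push_cast; ring
    · have hj' : Odd (j : ℕ) := by grind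
      by_cases hjk : (j : ℕ) + 1 < k
      · left
        have : Even ((j : ℕ) + 1) := by grind
        simp only [t', t, σ', adjacentSwap, hj, hj', hjk, this, if_true, if_false, dif_pos]
        push_cast; ring
      · right
        simp only [t', t, σ', adjacentSwap, hj, hj', hjk, if_true, if_false, dif_neg,
          not_false_eq_true, true_and]
        rw [hlast j hjk]
        linear_combination hkμ
  refine ⟨![reflectionIdempotent σ t 1, reflectionIdempotent σ t (-1),
    reflectionIdempotent σ' t' 1, reflectionIdempotent σ' t' (-1)], ?_, ?_⟩
  · intro i
    fin_cases i
    exacts [isIdempotentElem_reflectionIdempotent hσ ht (by norm_num),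
      isIdempotentElem_reflectionIdempotent hσ ht (by norm_num),
      isIdempotentElem_reflectionIdempotent hσ' ht' (by norm_num),
      isIdempotentElem_reflectionIdempotent hσ' ht' (by norm_num)]
  · refine LinearMap.ext fun f => ?_
    ext j
    have h := reflectionIdempotent_add_neg σ t f j
    have h' := reflectionIdempotent_add_neg σ' t' f j
    simp only [Fin.sum_univ_four, Matrix.cons_val, LinearMap.add_apply, PiLp.add_apply,
      LinearMap.smul_apply, Module.End.one_apply, PiLp.smul_apply, smul_eq_mul]
    simp only [t'] at h'
    linear_combination h + h'

/-- There exist four bounded idempotent operators on a nonzero complex Hilbert space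
summing to `λ·I` if and only if `λ = 2` or `λ = 2 ± 2/k` for some positive integer `k`. -/
theorem four_bounded_idempotents_sum_iff (lam : ℂ) :
    (∃ (H : Type) (_ : NormedAddCommGroup H) (_ : InnerProductSpace ℂ H)
      (_ : CompleteSpace H) (_ : Nontrivial H) (Q : Fin 4 → H →L[ℂ] H),
      (∀ k, Q k ^ 2 = Q k) ∧ ∑ k, Q k = lam • (1 : H →L[ℂ] H)) ↔
    (lam = 2 ∨ ∃ k : ℕ, 0 < k ∧ (lam = 2 + 2 / (k : ℂ) ∨ lam = 2 - 2 / (k : ℂ))) := by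
  constructor
  · rintro ⟨H, _, _, _, _, Q, hQ, hsum⟩
    refine or_iff_not_imp_left.mpr fun hlam => ?_
    have hidem : ∀ k, IsIdempotentElem (Q k) := fun k => by
      rw [IsIdempotentElem, ← sq, hQ k]
    obtain ⟨k, hk, h⟩ := exists_eq_two_div_of_four_idempotents_sum (μ := lam - 2) (hidem 0)
      (hidem 1) (hidem 2) (hidem 3) (sub_ne_zero.mpr hlam)
      (by rw [← Fin.sum_univ_four, hsum, Algebra.algebraMap_eq_smul_one]; congr 1; ring)
    refine ⟨k, hk, h.imp (fun h => ?_) fun h => ?_⟩ <;> linear_combination h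
  · rintro (rfl | ⟨k, hk, h⟩)
    · refine ⟨ℂ, inferInstance, inferInstance, inferInstance, inferInstance, ![1, 1, 0, 0], ?_, ?_⟩
      · intro k
        fin_cases k <;> simp
      · simp [Fin.sum_univ_four, two_smul, one_add_one_eq_two]
    · have : Nonempty (Fin k) := ⟨⟨0, hk⟩⟩
      obtain ⟨P, hP, hsum⟩ := exists_four_idempotents_sum_two_add k hk
      let φ := Module.End.toContinuousLinearMap (𝕜 := ℂ) (EuclideanSpace ℂ (Fin k))
      have hφ : ∀ i, IsIdempotentElem (φ (P i)) := fun i => (hP i).map φ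
      have hφsum : ∑ i, φ (P i) = (2 + 2 / (k : ℂ)) • 1 := by
        rw [← map_sum, hsum, map_smul, map_one]
      rcases h with rfl | rfl
      · exact ⟨EuclideanSpace ℂ (Fin k), inferInstance, inferInstance, inferInstance,
          inferInstance, fun i => φ (P i), fun i => by rw [sq, hφ i], hφsum⟩
      · refine ⟨EuclideanSpace ℂ (Fin k), inferInstance, inferInstance, inferInstance,
          inferInstance, fun i => 1 - φ (P i), fun i => by rw [sq, (hφ i).one_sub], ?_⟩
        rw [Finset.sum_sub_distrib, hφsum, Finset.sum_const, Finset.card_univ, Fintype.card_fin,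
          ← Nat.cast_smul_eq_nsmul ℂ, ← sub_smul]
        congr 1
        push_cast
        ring
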